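/- Let L be a field of characteristic p containing F_q, where q is a power of p. Let n ≥ 2, 1 ≤ k < n, and a, b nonnegative integers with a·k − b·(n−k) = 1. Let u ∈ L with Tr_{n−k}(u) ≠ a and Tr_k(u) ≠ b, and let V := { s ∈ L : Tr_n(s) · (Tr_{n−k}(u) − a) = Tr_{n−k}(s) · (Tr_n(u) − (a + b)) }. Then the map φ(s) := ( Tr_k(s) / (Tr_k(u) − b) )^q − Tr_k(s) / (Tr_k(u) − b) is injective on V; equivalently, if s ∈ V and φ(s) = 0 then s = 0. -/

import Mathlib

/-- The trace polynomial `Tr_i(x) = x + x^q + ⋯ + x^{q^{i-1}}`. -/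
def Tr {R : Type*} [CommRing R] (q i : ℕ) (x : R) : R :=
  ∑ j ∈ Finset.range i, x ^ q ^ j

theorem Tr_sub_aux {L : Type*} [Field L] (p e i : ℕ) [Fact p.Prime] [CharP L p] (x y : L) :
    Tr (p ^ e) i (x - y) = Tr (p ^ e) i x - Tr (p ^ e) i y := by
  unfold Tr
  rw [← Finset.sum_sub_distrib]
  refine Finset.sum_congr rfl fun j _ => ?_
  rw [← pow_mul, sub_pow_char_pow]

theorem pow_fix_aux {L : Type*} [Field L] (q : ℕ) (c : L) (hc : c ^ q = c) (j : ℕ) :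
    c ^ q ^ j = c := by
  induction j with
  | zero => simp
  | succ j ih => rw [pow_succ, pow_mul, ih, hc]

theorem Tr_smul_aux {L : Type*} [Field L] (q i : ℕ) (c x : L) (hc : c ^ q = c) :
    Tr q i (c * x) = c * Tr q i x := by
  unfold Tr
  rw [Finset.mul_sum]
  refine Finset.sum_congr rfl fun j _ => ?_
  rw [mul_pow, pow_fix_aux q c hc]

theorem sum_pow_aux {L : Type*} [Field L] (p e m : ℕ) [Fact p.Prime] [CharP L p]
    (s : Finset ℕ) (g : ℕ → L) :
    (∑ j ∈ s, g j) ^ (p ^ e) ^ m = ∑ j ∈ s, g j ^ (p ^ e) ^ m := by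
  rw [← pow_mul, sum_pow_char_pow]

theorem Tr_add_aux {L : Type*} [Field L] (p e m k : ℕ) [Fact p.Prime] [CharP L p] (x : L) :
    Tr (p ^ e) (m + k) x = Tr (p ^ e) m x + (Tr (p ^ e) k x) ^ (p ^ e) ^ m := by
  unfold Tr
  rw [Finset.sum_range_add, sum_pow_aux]
  congr 1
  refine Finset.sum_congr rfl fun j _ => ?_
  rw [← pow_mul x, ← pow_add, add_comm]

theorem Tr_fix_aux {L : Type*} [Field L] (p e i : ℕ) [Fact p.Prime] [CharP L p] (t : L)
    (h : (Tr (p ^ e) i t) ^ p ^ e = Tr (p ^ e) i t) :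
    Function.IsPeriodicPt (fun x : L => x ^ p ^ e) i t := by
  have h1 := Tr_add_aux p e 1 i t
  have h2 := Tr_add_aux p e i 1 t
  have h3 : Tr (p ^ e) 1 t = t := by simp [Tr]
  rw [add_comm 1 i, h2, h3, pow_one, h] at h1
  have h4 : t ^ (p ^ e) ^ i = t := by linear_combination h1
  unfold Function.IsPeriodicPt Function.IsFixedPt
  rw [pow_iterate]
  exact h4

theorem key_aux {L : Type*} [Field L] (p e m k a b : ℕ) [Fact p.Prime] [CharP L p]
    (hab : a * k = b * m + 1) (c t : L) (hc : c ^ p ^ e = c)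
    (h1 : Tr (p ^ e) k t = - (c * b)) (h2 : Tr (p ^ e) m t = - (c * a)) : t = 0 ∧ c = 0 := by
  have hnat : ∀ r : ℕ, (r : L) ^ p ^ e = r := fun r => by
    have := map_natCast (iterateFrobenius L p e) r
    rwa [iterateFrobenius_def] at this
  have hneg : ∀ r : ℕ, (-(c * r)) ^ p ^ e = -(c * r) := fun r => by
    have := map_neg (iterateFrobenius L p e) (c * r)
    rw [iterateFrobenius_def, iterateFrobenius_def] at this
    rw [this, mul_pow, hc, hnat]
  have p1 := Tr_fix_aux p e k t (by rw [h1, hneg])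
  have p2 := Tr_fix_aux p e m t (by rw [h2, hneg])
  have hco : Nat.gcd k m = 1 := by
    have d1 : Nat.gcd k m ∣ b * m + 1 := hab ▸ (Nat.gcd_dvd_left k m).mul_left a
    exact Nat.dvd_one.1 ((Nat.dvd_add_right ((Nat.gcd_dvd_right k m).mul_left b)).1 d1)
  have p3 := p1.gcd p2
  rw [hco] at p3
  have ht : t ^ p ^ e = t := by simpa [Function.IsPeriodicPt, Function.IsFixedPt] using p3
  have hT : ∀ i, Tr (p ^ e) i t = i * t := fun i => by
    unfold Tr
    simp [pow_fix_aux _ t ht]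
  rw [hT] at h1 h2
  have hL : (a : L) * k = b * m + 1 := by exact_mod_cast congrArg (Nat.cast : ℕ → L) hab
  have t0 : t = 0 := by linear_combination (a : L) * h1 - b * h2 - t * hL
  refine ⟨t0, ?_⟩
  subst t0
  linear_combination (-c) * hL + (k : L) * h2 - m * h1

/-- For a field `L ⊇ F_q` and `u` with `Tr_{n−k}(u) ≠ a`, `Tr_k(u) ≠ b`,
the map `φ(s) = (Tr_k(s)/(Tr_k(u) − b))^q − Tr_k(s)/(Tr_k(u) − b)` is injective on
`V = {s : Tr_n(s)·(Tr_{n−k}(u) − a) = Tr_{n−k}(s)·(Tr_n(u) − (a+b))}`; equivalently,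
if `s ∈ V` and `φ(s) = 0` then `s = 0`. -/
theorem stmt_15 (p e q n k a b : ℕ) (hp : p.Prime) (he : 0 < e) (hq : q = p ^ e)
    (hn : 2 ≤ n) (hk1 : 1 ≤ k) (hkn : k < n) (hab : a * k = b * (n - k) + 1)
    (Fq : Type*) [Field Fq] [Fintype Fq] (hcard : Fintype.card Fq = q)
    (L : Type*) [Field L] [Algebra Fq L]
    (u : L) (hua : Tr q (n - k) u ≠ (a : L)) (hub : Tr q k u ≠ (b : L))
    (V : Set L)
    (hV : V = {s : L | Tr q n s * (Tr q (n - k) u - (a : L))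
                       = Tr q (n - k) s * (Tr q n u - ((a : L) + (b : L)))})
    (φ : L → L)
    (hφ : φ = fun s => (Tr q k s / (Tr q k u - (b : L))) ^ q
                       - Tr q k s / (Tr q k u - (b : L))) :
    Set.InjOn φ V ∧ ∀ s ∈ V, φ s = 0 → s = 0 := by
  have hpf : Fact p.Prime := ⟨hp⟩
  have hpF : (p : Fq) = 0 := by
    have h := FiniteField.cast_card_eq_zero Fq
    rw [hcard, hq, Nat.cast_pow] at h
    exact pow_eq_zero_iff (he.ne') |>.1 h
  have hpL : (p : L) = 0 := by
    have := congrArg (algebraMap Fq L) hpF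
    simpa using this
  have hch : CharP L p := (CharP.charP_iff_prime_eq_zero hp).2 hpL
  clear hcard hpF
  obtain ⟨m, rfl⟩ : ∃ m, n = m + k := ⟨n - k, by omega⟩
  rw [Nat.add_sub_cancel] at hab hua hV
  subst hq hV hφ
  have main : ∀ s ∈ {s : L | Tr (p ^ e) (m + k) s * (Tr (p ^ e) m u - (a : L))
      = Tr (p ^ e) m s * (Tr (p ^ e) (m + k) u - ((a : L) + (b : L)))},
      (Tr (p ^ e) k s / (Tr (p ^ e) k u - (b : L))) ^ p ^ e
        - Tr (p ^ e) k s / (Tr (p ^ e) k u - (b : L)) = 0 → s = 0 := by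
    intro s hs h
    have hs' : Tr (p ^ e) (m + k) s * (Tr (p ^ e) m u - (a : L))
      = Tr (p ^ e) m s * (Tr (p ^ e) (m + k) u - ((a : L) + (b : L))) := hs
    have hB : Tr (p ^ e) k u - (b : L) ≠ 0 := sub_ne_zero.2 hub
    obtain ⟨c, hcdef⟩ : ∃ c, c = Tr (p ^ e) k s / (Tr (p ^ e) k u - (b : L)) := ⟨_, rfl⟩
    rw [← hcdef] at h
    have hc : c ^ p ^ e = c := sub_eq_zero.1 h
    have hks : Tr (p ^ e) k s = c * (Tr (p ^ e) k u - b) := by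
      rw [hcdef, div_mul_cancel₀ _ hB]
    have hD : (Tr (p ^ e) k u - (b : L)) ^ (p ^ e) ^ m = (Tr (p ^ e) k u) ^ (p ^ e) ^ m - b := by
      have := map_natCast (iterateFrobenius L p (e * m)) b
      rw [iterateFrobenius_def] at this
      rw [← pow_mul, sub_pow_char_pow, this]
    have hD0 := pow_ne_zero ((p ^ e) ^ m) hB
    rw [Tr_add_aux, Tr_add_aux, hks, mul_pow, pow_fix_aux _ c hc] at hs'
    have hms : Tr (p ^ e) m s = c * (Tr (p ^ e) m u - a) := by
      apply mul_right_cancel₀ hD0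
      linear_combination -hs' + Tr (p ^ e) m s * hD
    have := key_aux p e m k a b hab c (s - c * u) hc
      (by rw [Tr_sub_aux, Tr_smul_aux _ _ _ _ hc, hks]; ring)
      (by rw [Tr_sub_aux, Tr_smul_aux _ _ _ _ hc, hms]; ring)
    obtain ⟨h5, h6⟩ := this
    simpa [h6] using h5
  refine ⟨?_, main⟩
  intro x hx y hy hxy
  have hx' : Tr (p ^ e) (m + k) x * (Tr (p ^ e) m u - (a : L))
      = Tr (p ^ e) m x * (Tr (p ^ e) (m + k) u - ((a : L) + (b : L))) := hx
  have hy' : Tr (p ^ e) (m + k) y * (Tr (p ^ e) m u - (a : L))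
      = Tr (p ^ e) m y * (Tr (p ^ e) (m + k) u - ((a : L) + (b : L))) := hy
  refine sub_eq_zero.1 (main (x - y) ?_ ?_)
  · show Tr (p ^ e) (m + k) (x - y) * (Tr (p ^ e) m u - (a : L))
      = Tr (p ^ e) m (x - y) * (Tr (p ^ e) (m + k) u - ((a : L) + (b : L)))
    rw [Tr_sub_aux, Tr_sub_aux]
    linear_combination hx' - hy'
  · rw [Tr_sub_aux, sub_div, sub_pow_char_pow]
    simp only at hxy
    linear_combination hxy
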